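/- Let 0 ≤ s < m and 0 ≤ r < n be integers, and let S be a uniformly random n-element subset of {1,…,m+n}. For integers i, k with 0 ≤ i ≤ m−s−1 and 0 ≤ k ≤ n−r−1, the probability that A_s(S) = k and B_r(S) = i equals C(s+k, s) · C(r+i, r) · C(m+n−s−r−i−k−2, n−r−k−1) / C(m+n, n), where C(a, b) denotes the binomial coefficient. (Equivalently, the number of n-element subsets S of {1,…,m+n} with A_s(S) = k and B_r(S) = i equals C(s+k, s) · C(r+i, r) · C(m+n−s−r−i−k−2, n−r−k−1).) -/

import Mathlib

open Finset

/-- The `j`-th smallest element (1-indexed) of a finite set of naturals. -/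
def nthSmallest (T : Finset ℕ) (j : ℕ) : ℕ :=
  (T.sort (· ≤ ·)).getD (j - 1) 0

/-- Exceedance statistic: for an `n`-element subset `S` of `{1,…,m+n}` (the ranks of the
`Y`-sample), the number of elements of `S` greater than `X_{(m-s)}`, the `(m-s)`-th smallest
element of the complement of `S`. -/
def Aexc (m n s : ℕ) (S : Finset ℕ) : ℕ :=
  (S.filter fun y => nthSmallest (Finset.Icc 1 (m + n) \ S) (m - s) < y).card

/-- Precedence statistic: the number of elements of the complement of `S` smaller than
`Y_{(r+1)}`, the `(r+1)`-th smallest element of `S`. -/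
def Bprec (m n r : ℕ) (S : Finset ℕ) : ℕ :=
  ((Finset.Icc 1 (m + n) \ S).filter fun x => x < nthSmallest S (r + 1)).card


lemma nthSmallest_spec (T : Finset ℕ) (j : ℕ) (hj : j < T.card) :
    nthSmallest T (j + 1) ∈ T ∧ (T.filter (· < nthSmallest T (j + 1))).card = j := by
  have h : nthSmallest T (j + 1) = T.orderEmbOfFin rfl ⟨j, hj⟩ := by
    rw [Finset.orderEmbOfFin_apply]
    simp [nthSmallest, List.getD_eq_getElem?_getD, hj]
  rw [h]
  refine ⟨Finset.orderEmbOfFin_mem _ _ _, ?_⟩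
  have : T.filter (· < T.orderEmbOfFin rfl ⟨j, hj⟩)
      = (Finset.Iio (⟨j, hj⟩ : Fin T.card)).map (T.orderEmbOfFin rfl).toEmbedding := by
    ext x
    simp only [Finset.mem_filter, Finset.mem_map, Finset.mem_Iio]
    constructor
    · rintro ⟨hx, hlt⟩
      have hx' : x ∈ Set.range (T.orderEmbOfFin rfl) := by
        rw [Finset.range_orderEmbOfFin]; exact hx
      obtain ⟨a, rfl⟩ := hx'
      exact ⟨a, (T.orderEmbOfFin rfl).lt_iff_lt.1 hlt, rfl⟩
    · rintro ⟨a, ha, rfl⟩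
      exact ⟨Finset.orderEmbOfFin_mem _ _ _, (T.orderEmbOfFin rfl).lt_iff_lt.2 ha⟩
  rw [this, Finset.card_map, Fin.card_Iio]

lemma filter_lt_unique (T : Finset ℕ) (a b : ℕ) (ha : a ∈ T) (hb : b ∈ T)
    (h : (T.filter (· < a)).card = (T.filter (· < b)).card) : a = b := by
  have key : ∀ a b : ℕ, a ∈ T → a < b →
      (T.filter (· < a)).card < (T.filter (· < b)).card := by
    intro a b ha hab
    apply Finset.card_lt_card
    rw [Finset.ssubset_iff_of_subset]
    · exact ⟨a, by simp [ha, hab], by simp⟩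
    · intro x hx
      simp only [Finset.mem_filter] at hx ⊢
      exact ⟨hx.1, by omega⟩
  rcases lt_trichotomy a b with hl | hl | hl
  · have := key a b ha hl; omega
  · exact hl
  · have := key b a hb hl; omega

lemma card_split_lt (N y : ℕ) (S : Finset ℕ) (hS : S ⊆ Finset.Icc 1 N) (hy : y ∈ Finset.Icc 1 N) :
    (S.filter (· < y)).card + ((Finset.Icc 1 N \ S).filter (· < y)).card = y - 1 := by
  rw [← Finset.card_union_of_disjoint]
  · have : S.filter (· < y) ∪ (Finset.Icc 1 N \ S).filter (· < y) = Finset.Ico 1 y := by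
      ext x
      have := @hS x
      simp only [Finset.mem_union, Finset.mem_filter, Finset.mem_sdiff, Finset.mem_Icc,
        Finset.mem_Ico] at *
      by_cases hx : x ∈ S
      · have := this hx
        simp [hx]; omega
      · simp [hx]; omega
    rw [this, Nat.card_Ico]
  · rw [Finset.disjoint_left]
    intro x hx hx'
    simp only [Finset.mem_filter, Finset.mem_sdiff] at hx hx'
    exact hx'.1.2 hx.1

lemma card_split_gt (S : Finset ℕ) (x : ℕ) (hx : x ∉ S) :
    (S.filter (· < x)).card + (S.filter (x < ·)).card = S.card := by
  rw [← Finset.card_filter_add_card_filter_not (s := S) (· < x)]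
  congr 2
  apply Finset.filter_congr
  intro y hy
  have : y ≠ x := fun h => hx (h ▸ hy)
  omega

lemma Bprec_iff (m n r i : ℕ) (hr : r < n) (S : Finset ℕ) (hS : S ⊆ Finset.Icc 1 (m + n))
    (hc : S.card = n) :
    Bprec m n r S = i ↔ (r + i + 1 ∈ S ∧ (S.filter (· < r + i + 1)).card = r) := by
  obtain ⟨h1, h2⟩ := nthSmallest_spec S r (by omega)
  have h3 := card_split_lt (m + n) _ S hS (hS h1)
  have h4 := Finset.mem_Icc.1 (hS h1)
  unfold Bprec
  constructor
  · intro h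
    have : nthSmallest S (r + 1) = r + i + 1 := by omega
    rw [this] at h1 h2
    exact ⟨h1, h2⟩
  · rintro ⟨ha, hb⟩
    have := filter_lt_unique S _ _ h1 ha (by omega)
    omega

lemma Aexc_iff (m n s k : ℕ) (hs : s < m) (hk : k ≤ n) (S : Finset ℕ)
    (hS : S ⊆ Finset.Icc 1 (m + n)) (hc : S.card = n) :
    Aexc m n s S = k ↔ (m + n - s - k ∉ S ∧ (S.filter (m + n - s - k < ·)).card = k) := by
  have hcc : (Finset.Icc 1 (m + n) \ S).card = m := by
    rw [Finset.card_sdiff_of_subset hS, Nat.card_Icc, hc]; omega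
  obtain ⟨h1, h2⟩ := nthSmallest_spec (Finset.Icc 1 (m + n) \ S) (m - s - 1) (by omega)
  have e : m - s - 1 + 1 = m - s := by omega
  rw [e] at h1 h2
  obtain ⟨h5, h6⟩ := Finset.mem_sdiff.1 h1
  have h3 := card_split_lt (m + n) _ S hS h5
  have h7 := card_split_gt S _ h6
  have h4 := Finset.mem_Icc.1 h5
  unfold Aexc
  constructor
  · intro h
    have : nthSmallest (Finset.Icc 1 (m + n) \ S) (m - s) = m + n - s - k := by omega
    rw [this] at h6 h
    exact ⟨h6, h⟩
  · rintro ⟨ha, hb⟩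
    have hq : m + n - s - k ∈ Finset.Icc 1 (m + n) := by
      rw [Finset.mem_Icc]; omega
    have h8 := card_split_lt (m + n) _ S hS hq
    have h9 := card_split_gt S _ ha
    have := filter_lt_unique (Finset.Icc 1 (m + n) \ S) _ _ h1
      (Finset.mem_sdiff.2 ⟨hq, ha⟩) (by omega)
    rw [this]
    exact hb

lemma card_three (S : Finset ℕ) (N p q : ℕ) (hpq : p < q)
    (hS : S ⊆ Finset.Icc 1 N) (hp : p ∈ S) (hq : q ∉ S) :
    (S.filter (· < p)).card + 1 + (S.filter (fun x => p < x ∧ x < q)).card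
      + (S.filter (q < ·)).card = S.card := by
  have h1 := card_split_gt (S.erase p) p (by simp)
  have h2 := card_split_gt (S.filter (p < ·)) q (by simp [hq])
  have h3 := Finset.card_erase_add_one hp
  have e1 : (S.erase p).filter (· < p) = S.filter (· < p) := by
    ext x; simp only [Finset.mem_filter, Finset.mem_erase]; grind
  have e2 : (S.erase p).filter (p < ·) = S.filter (p < ·) := by
    ext x; simp only [Finset.mem_filter, Finset.mem_erase]; grind
  have e3 : (S.filter (p < ·)).filter (· < q) = S.filter (fun x => p < x ∧ x < q) := by
    ext x; simp only [Finset.mem_filter]; grind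
  have e4 : (S.filter (p < ·)).filter (q < ·) = S.filter (q < ·) := by
    ext x; simp only [Finset.mem_filter]; grind
  rw [e1, e2] at h1
  rw [e3, e4] at h2
  omega

lemma count_aux (N p q n r k : ℕ) (hp : 1 ≤ p) (hpq : p < q) (hq : q ≤ N) (hn : r + 1 + k ≤ n) :
    (((Finset.Icc 1 N).powersetCard n).filter (fun S =>
      (q ∉ S ∧ (S.filter (q < ·)).card = k) ∧ (p ∈ S ∧ (S.filter (· < p)).card = r))).card
    = (((Finset.Ico 1 p).powersetCard r) ×ˢ (((Finset.Ioo p q).powersetCard (n - r - k - 1)) ×ˢ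
        ((Finset.Ioc q N).powersetCard k))).card := by
  have main : ∀ a b c : Finset ℕ, a ⊆ Finset.Ico 1 p → b ⊆ Finset.Ioo p q → c ⊆ Finset.Ioc q N →
      insert p (a ∪ b ∪ c) ⊆ Finset.Icc 1 N ∧ q ∉ insert p (a ∪ b ∪ c) ∧
      (insert p (a ∪ b ∪ c)).filter (· < p) = a ∧
      (insert p (a ∪ b ∪ c)).filter (fun x => p < x ∧ x < q) = b ∧
      (insert p (a ∪ b ∪ c)).filter (q < ·) = c := by
    intro a b c ha hb hc
    have ha' : ∀ x ∈ a, 1 ≤ x ∧ x < p := fun x hx => Finset.mem_Ico.1 (ha hx)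
    have hb' : ∀ x ∈ b, p < x ∧ x < q := fun x hx => Finset.mem_Ioo.1 (hb hx)
    have hc' : ∀ x ∈ c, q < x ∧ x ≤ N := fun x hx => Finset.mem_Ioc.1 (hc hx)
    clear ha hb hc
    refine ⟨?_, ?_, ?_, ?_, ?_⟩
    · intro x hx
      simp only [Finset.mem_insert, Finset.mem_union] at hx
      rw [Finset.mem_Icc]
      grind
    · simp only [Finset.mem_insert, Finset.mem_union]
      grind
    all_goals
      ext x
      simp only [Finset.mem_insert, Finset.mem_union, Finset.mem_filter]
      grind
  refine Finset.card_bij'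
    (fun S _ => (S.filter (· < p), (S.filter (fun x => p < x ∧ x < q), S.filter (q < ·))))
    (fun t _ => insert p (t.1 ∪ t.2.1 ∪ t.2.2)) ?_ ?_ ?_ ?_
  · intro S hS
    simp only [Finset.mem_filter, Finset.mem_powersetCard] at hS
    obtain ⟨⟨hS, hc⟩, ⟨h1, h2⟩, h3, h4⟩ := hS
    have h5 := card_three S N p q hpq hS h3 h1
    simp only [Finset.mem_product, Finset.mem_powersetCard]
    refine ⟨⟨?_, h4⟩, ⟨?_, by omega⟩, ?_, h2⟩
    all_goals
      intro x hx
      have hx' := Finset.mem_filter.1 hx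
      have := Finset.mem_Icc.1 (hS hx'.1)
      simp only [Finset.mem_Ico, Finset.mem_Ioo, Finset.mem_Ioc]
      omega
  · rintro ⟨a, b, c⟩ h
    simp only [Finset.mem_product, Finset.mem_powersetCard] at h
    obtain ⟨⟨ha, ha'⟩, ⟨hb, hb'⟩, hc, hc'⟩ := h
    obtain ⟨h1, h2, h3, h4, h5⟩ := main a b c ha hb hc
    have h6 := card_three _ N p q hpq h1 (Finset.mem_insert_self _ _) h2
    rw [h3, h4, h5] at h6
    simp only [Finset.mem_filter, Finset.mem_powersetCard]
    refine ⟨⟨h1, by omega⟩, ⟨h2, by rw [h5, hc']⟩, Finset.mem_insert_self _ _, by rw [h3, ha']⟩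
  · intro S hS
    simp only [Finset.mem_filter, Finset.mem_powersetCard] at hS
    obtain ⟨⟨hS, hc⟩, ⟨h1, h2⟩, h3, h4⟩ := hS
    ext x
    simp only [Finset.mem_insert, Finset.mem_union, Finset.mem_filter]
    by_cases hxp : x = p
    · simp [hxp, h3]
    · by_cases hxq : x = q
      · subst hxq; simp [h1, hxp]
      · by_cases hx : x ∈ S
        · simp [hx]; omega
        · simp [hx, hxp]
  · rintro ⟨a, b, c⟩ h
    simp only [Finset.mem_product, Finset.mem_powersetCard] at h
    obtain ⟨⟨ha, ha'⟩, ⟨hb, hb'⟩, hc, hc'⟩ := h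
    obtain ⟨h1, h2, h3, h4, h5⟩ := main a b c ha hb hc
    simp only [h3, h4, h5]

/-- First case of Theorem 1: the null joint distribution of `(A_s, B_r)` for a uniformly
random `n`-element subset of `{1,…,m+n}`. -/
theorem sidak_joint_null_case1 (m n s r i k : ℕ) (hs : s < m) (hr : r < n)
    (hi : i ≤ m - s - 1) (hk : k ≤ n - r - 1) :
    ((((Finset.Icc 1 (m + n)).powersetCard n).filter
        (fun S => Aexc m n s S = k ∧ Bprec m n r S = i)).card : ℚ)
        / ((m + n).choose n : ℚ)
      = ((s + k).choose s * (r + i).choose r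
            * (m + n - s - r - i - k - 2).choose (n - r - k - 1) : ℚ)
        / ((m + n).choose n : ℚ) ∧
    (((Finset.Icc 1 (m + n)).powersetCard n).filter
        (fun S => Aexc m n s S = k ∧ Bprec m n r S = i)).card
      = (s + k).choose s * (r + i).choose r
          * (m + n - s - r - i - k - 2).choose (n - r - k - 1) := by
  have key : (((Finset.Icc 1 (m + n)).powersetCard n).filter
        (fun S => Aexc m n s S = k ∧ Bprec m n r S = i)).card
      = (s + k).choose s * (r + i).choose r
          * (m + n - s - r - i - k - 2).choose (n - r - k - 1) := by
    have e : ((Finset.Icc 1 (m + n)).powersetCard n).filter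
        (fun S => Aexc m n s S = k ∧ Bprec m n r S = i)
        = ((Finset.Icc 1 (m + n)).powersetCard n).filter (fun S =>
          (m + n - s - k ∉ S ∧ (S.filter (m + n - s - k < ·)).card = k) ∧
            (r + i + 1 ∈ S ∧ (S.filter (· < r + i + 1)).card = r)) := by
      apply Finset.filter_congr
      intro S hS
      obtain ⟨hS, hc⟩ := Finset.mem_powersetCard.1 hS
      rw [Aexc_iff m n s k hs (by omega) S hS hc, Bprec_iff m n r i hr S hS hc]
    rw [e, count_aux (m + n) (r + i + 1) (m + n - s - k) n r k (by omega) (by omega) (by omega)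
      (by omega)]
    simp only [Finset.card_product, Finset.card_powersetCard, Nat.card_Ico, Nat.card_Ioo,
      Nat.card_Ioc]
    have e1 : r + i + 1 - 1 = r + i := by omega
    have e2 : m + n - s - k - (r + i + 1) - 1 = m + n - s - r - i - k - 2 := by omega
    have e3 : m + n - (m + n - s - k) = s + k := by omega
    rw [e1, e2, e3, Nat.choose_symm_add (a := s) (b := k)]
    ring
  refine ⟨?_, key⟩
  rw [key]
  push_cast
  rfl
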